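/- In the damped model, assume additionally that the first column of C is positive (C_{i1} > 0 for all i) and that 1/2 < γ < 1. Then there exists δ > 0, depending only on C, d and γ, such that for every admissible weight function g₁ with L⁻(g₁) ≥ δ and every weight function g₂ (admissible or the constant 1), the map f has a fixed point x ∈ Σ with x₁ > 1/2. -/

import Mathlib

open Set Matrix

/-- An admissible weight function. -/
def IsAdmissible (g g' : ℝ → ℝ) : Prop :=
  (∀ x ∈ Set.Icc (0:ℝ) 1, HasDerivWithinAt g (g' x) (Set.Icc (0:ℝ) 1) x) ∧
  ContinuousOn g' (Set.Icc (0:ℝ) 1) ∧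
  g 0 = 1 ∧
  (∀ x ∈ Set.Icc (0:ℝ) 1, 0 < g x) ∧
  (∀ x ∈ Set.Icc (0:ℝ) 1, 0 < g' x)

/-- A weight function for the damped model: either admissible or the constant `1`. -/
def IsWeight (g g' : ℝ → ℝ) : Prop :=
  (∀ x ∈ Set.Icc (0:ℝ) 1, HasDerivWithinAt g (g' x) (Set.Icc (0:ℝ) 1) x) ∧
  ContinuousOn g' (Set.Icc (0:ℝ) 1) ∧
  g 0 = 1 ∧
  (∀ x ∈ Set.Icc (0:ℝ) 1, 0 < g x) ∧
  ((∀ x ∈ Set.Icc (0:ℝ) 1, 0 < g' x) ∨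
    ((∀ x ∈ Set.Icc (0:ℝ) 1, g x = 1) ∧ ∀ x ∈ Set.Icc (0:ℝ) 1, g' x = 0))

/-- The set of values `g'(x)/g(x)` for `x ∈ [0,1]`; its minimum is `L⁻(g)`. -/
def ratioSet (g g' : ℝ → ℝ) : Set ℝ := (fun x => g' x / g x) '' Set.Icc (0:ℝ) 1

/-- The damped transition matrix. -/
noncomputable def Md {n : ℕ} (C : Matrix (Fin n) (Fin n) ℝ) (d : Fin n → ℝ)
    (γ : ℝ) (g₁ g₂ : ℝ → ℝ) (x : Fin n → ℝ) : Matrix (Fin n) (Fin n) ℝ :=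
  Matrix.of fun i j =>
    γ * (C i j * g₁ (x j) / ∑ k, C i k * g₁ (x k)) +
    (1 - γ) * (d j * g₂ (x j) / ∑ k, d k * g₂ (x k))

/-- The map `f(x) = x · M(x)` of the damped model. -/
noncomputable def fd {n : ℕ} (C : Matrix (Fin n) (Fin n) ℝ) (d : Fin n → ℝ)
    (γ : ℝ) (g₁ g₂ : ℝ → ℝ) (x : Fin n → ℝ) : Fin n → ℝ :=
  Matrix.vecMul x (Md C d γ g₁ g₂ x)

open Function MeasureTheory Metric Filter Topology
open scoped NNReal

/-!
The mass that the damped chain sends to a state `i₀` with positive column is driven by `g₁`: if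
`x i₀ ≥ a > 1/2`, every other coordinate of `x` lies below `x i₀` by at least `2 * a - 1`, so
`g₁' ≥ δ * g₁` makes its weight smaller than that of `i₀` by a factor `exp (-(δ * (2 * a - 1)))`.
For `δ` large every row of the link part then puts mass at least `a / γ` on `i₀`, where `a < γ`, so
the compact convex set of stochastic vectors with `x i₀ ≥ a` is invariant and Brouwer's theorem
gives a fixed point in it.

Brouwer's theorem is obtained by the Milnor–Rogers volume argument. If `r` is a `C¹` map fixing the
frontier of a compact set `s` and `q = r - id`, then `∫ x in s, det (1 + t • q' x)` is a polynomial
in `t`; for small `t` the map `id + t • q` is a bijection of `s`, so the polynomial is constant,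
equal to the volume of `s`. If `r` mapped a ball into its sphere, the integrand would vanish at
`t = 1`.
-/

section Determinant

open Polynomial

lemma exists_polynomial_eval_eq_det_one_add_smul {R M : Type*} [CommRing R] [Nontrivial R]
    [AddCommGroup M] [Module R M] [Module.Free R M] [Module.Finite R M] (A : M →ₗ[R] M) :
    ∃ p : R[X], p.natDegree ≤ Module.finrank R M ∧ ∀ t : R, p.eval t = (1 + t • A).det := by
  classical
  let b := Module.finBasis R M
  let B := LinearMap.toMatrix b b A
  refine ⟨((X : R[X]) • B.map C + (1 : Matrix _ _ R).map C).det, ?_, fun t => ?_⟩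
  · simpa only [Fintype.card_fin] using natDegree_det_X_add_C_le B 1
  · have hmatrix : LinearMap.toMatrix b b (1 + t • A) = 1 + t • B := by
      rw [map_add, map_smul, LinearMap.toMatrix_one]
    rw [← LinearMap.det_toMatrix b, hmatrix, ← coe_evalRingHom, RingHom.map_det]
    congr 1
    ext i j
    by_cases hij : i = j <;> simp [hij, add_comm, mul_comm t]

lemma integral_eval_eq_of_infinite {α : Type*} [MeasurableSpace α] {μ : Measure α} {p : α → ℝ[X]}
    {m : ℕ} (hdeg : ∀ x, (p x).natDegree ≤ m)
    (hint : ∀ t, Integrable (fun x => (p x).eval t) μ) {S : Set ℝ} (hS : S.Infinite) {c : ℝ}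
    (hc : ∀ t ∈ S, ∫ x, (p x).eval t ∂μ = c) (t : ℝ) : ∫ x, (p x).eval t ∂μ = c := by
  obtain ⟨s, hsS, hcard⟩ := hS.exists_subset_card_eq (m + 1)
  have hs : s.Nonempty := Finset.card_pos.1 (by lia)
  have hinterp (x : α) :
      (p x).eval t = ∑ v ∈ s, (Lagrange.basis s id v).eval t * (p x).eval v := by
    have hlt : (p x).degree < s.card :=
      degree_le_natDegree.trans_lt (by rw [hcard]; exact_mod_cast Nat.lt_succ_of_le (hdeg x))
    conv_lhs => rw [Lagrange.eq_interpolate (injOn_id _) hlt]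
    simp only [Lagrange.interpolate_apply, eval_finsetSum, eval_mul, eval_C, id_eq, mul_comm]
  have hbasis : ∑ v ∈ s, (Lagrange.basis s id v).eval t = 1 := by
    rw [← eval_finsetSum, Lagrange.sum_basis (injOn_id _) hs, eval_one]
  calc ∫ x, (p x).eval t ∂μ
      = ∑ v ∈ s, (Lagrange.basis s id v).eval t * ∫ x, (p x).eval v ∂μ := by
        simp only [hinterp]
        rw [integral_finsetSum _ fun v _ => (hint v).const_mul _]
        simp only [integral_const_mul]
    _ = ∑ v ∈ s, (Lagrange.basis s id v).eval t * c :=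
        Finset.sum_congr rfl fun v hv => by rw [hc v (hsS hv)]
    _ = c := by rw [← Finset.sum_mul, hbasis, one_mul]

end Determinant

section Volume

variable {E : Type*} [NormedAddCommGroup E]

lemma bijective_id_add_of_lipschitzWith [CompleteSpace E] {g : E → E} {K : ℝ≥0}
    (hg : LipschitzWith K g) (hK : K < 1) : Bijective fun x => x + g x := by
  refine ⟨?_, fun y => ?_⟩
  · have hid : AntilipschitzWith 1 (id : E → E) := .id
    exact (hid.add_lipschitzWith hg (by simpa using hK)).injective
  · have hcontr : ContractingWith K fun x => y - g x :=
      ⟨hK, by simpa using (LipschitzWith.const y).sub hg⟩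
    have hfix : y - g (hcontr.fixedPoint _) = hcontr.fixedPoint _ := hcontr.fixedPoint_isFixedPt
    exact ⟨_, (sub_eq_iff_eq_add.1 hfix).symm⟩

lemma image_eq_self_of_bijective_of_eqOn_compl {α : Type*} {f : α → α} (hf : Bijective f)
    {s : Set α} (hs : ∀ x ∉ s, f x = x) : f '' s = s := by
  have hcompl : f '' sᶜ = sᶜ := (image_congr hs).trans (image_id' _)
  rw [← compl_inj_iff, ← image_compl_eq hf, hcompl]

lemma inter_frontier_nonempty_of_isPreconnected {X : Type*} [TopologicalSpace X] {t s : Set X}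
    (ht : IsPreconnected t) (hts : (t ∩ s).Nonempty) (hdiff : (t \ s).Nonempty) :
    (t ∩ frontier s).Nonempty := by
  by_contra hempty
  have hcover : t ⊆ interior s ∪ (closure s)ᶜ := fun z hz => by
    by_contra hnot
    rw [mem_union, mem_compl_iff, not_or, not_not] at hnot
    exact hempty ⟨z, hz, hnot.2, hnot.1⟩
  obtain ⟨x, hxt, hxs⟩ := hts
  obtain ⟨y, hyt, hys⟩ := hdiff
  have hx : x ∈ interior s := (hcover hxt).resolve_right fun h => h (subset_closure hxs)
  have hy : y ∈ (closure s)ᶜ := (hcover hyt).resolve_left fun h => hys (interior_subset h)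
  obtain ⟨z, -, hzint, hzcl⟩ :=
    ht _ _ isOpen_interior isClosed_closure.isOpen_compl hcover ⟨x, hxt, hx⟩ ⟨y, hyt, hy⟩
  exact hzcl (subset_closure (interior_subset hzint))

variable [NormedSpace ℝ E]

lemma exists_mem_segment_mem_frontier {s : Set E} {x y : E} (hx : x ∈ s) (hy : y ∉ s) :
    ∃ z ∈ segment ℝ x y, z ∈ frontier s :=
  inter_frontier_nonempty_of_isPreconnected (convex_segment x y).isPreconnected
    ⟨x, left_mem_segment ℝ x y, hx⟩ ⟨y, right_mem_segment ℝ x y, hy⟩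

lemma lipschitzWith_indicator_of_eqOn_frontier {F : Type*} [NormedAddCommGroup F] {s : Set E}
    (hs : IsClosed s) {q : E → F} {K : ℝ≥0} (hq : LipschitzOnWith K q s)
    (hq0 : ∀ x ∈ frontier s, q x = 0) : LipschitzWith K (s.indicator q) := by
  have hcross {x y : E} (hx : x ∈ s) (hy : y ∉ s) :
      dist (s.indicator q x) (s.indicator q y) ≤ K * dist x y := by
    obtain ⟨z, hz, hzs⟩ := exists_mem_segment_mem_frontier hx hy
    rw [indicator_of_mem hx, indicator_of_notMem hy, ← hq0 z hzs]
    calc dist (q x) (q z) ≤ K * dist x z := hq.dist_le_mul x hx z (hs.frontier_subset hzs)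
      _ ≤ K * dist x y := by
        gcongr
        linarith [dist_add_dist_of_mem_segment hz, dist_nonneg (x := z) (y := y)]
  refine LipschitzWith.of_dist_le_mul fun x y => ?_
  by_cases hx : x ∈ s <;> by_cases hy : y ∈ s
  · simpa only [indicator_of_mem hx, indicator_of_mem hy] using hq.dist_le_mul x hx y hy
  · exact hcross hx hy
  · rw [dist_comm, dist_comm x]
    exact hcross hy hx
  · rw [indicator_of_notMem hx, indicator_of_notMem hy, dist_self]
    positivity

lemma eventually_forall_det_one_add_smul_pos {k : Set (E →L[ℝ] E)} (hk : IsCompact k) :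
    ∀ᶠ t : ℝ in 𝓝 0, ∀ A ∈ k, 0 < (1 + t • A).det := by
  have hcont : Continuous fun z : ℝ × (E →L[ℝ] E) => (1 + z.1 • z.2).det :=
    ContinuousLinearMap.continuous_det.comp (by fun_prop)
  refine hk.eventually_forall_of_forall_eventually fun A _ => ?_
  refine hcont.continuousAt.eventually_const_lt ?_
  simp [ContinuousLinearMap.det]

variable [FiniteDimensional ℝ E] [MeasurableSpace E] [BorelSpace E]
    (μ : Measure E) [μ.IsAddHaarMeasure]

lemma setIntegral_det_one_add_of_lipschitzWith_lt_one {s : Set E} (hs : MeasurableSet s)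
    {g : E → E} {g' : E → E →L[ℝ] E} {K : ℝ≥0} (hg : LipschitzWith K g) (hK : K < 1)
    (hg0 : ∀ x ∉ s, g x = 0) (hg' : ∀ x ∈ s, HasFDerivWithinAt g (g' x) s x)
    (hpos : ∀ x ∈ s, 0 < (1 + g' x).det) :
    ∫ x in s, (1 + g' x).det ∂μ = μ.real s := by
  have hbij := bijective_id_add_of_lipschitzWith hg hK
  have himage : (fun x => x + g x) '' s = s :=
    image_eq_self_of_bijective_of_eqOn_compl hbij fun x hx => by rw [hg0 x hx, add_zero]
  have hderiv (x) (hx : x ∈ s) : HasFDerivWithinAt (fun x => x + g x) (1 + g' x) s x :=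
    (hasFDerivWithinAt_id x s).add (hg' x hx)
  calc ∫ x in s, (1 + g' x).det ∂μ
      = ∫ x in s, |(1 + g' x).det| • (1 : ℝ) ∂μ :=
        setIntegral_congr_fun hs fun x hx => by
          rw [abs_of_pos (hpos x hx), smul_eq_mul, mul_one]
    _ = ∫ _ in (fun x => x + g x) '' s, (1 : ℝ) ∂μ :=
        (integral_image_eq_integral_abs_det_fderiv_smul μ hs hderiv hbij.injective.injOn
          fun _ => (1 : ℝ)).symm
    _ = μ.real s := by rw [himage, setIntegral_const, smul_eq_mul, mul_one]

lemma setIntegral_det_one_add_of_lipschitzWith {s : Set E} (hs : IsCompact s)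
    {g : E → E} {g' : E → E →L[ℝ] E} {K : ℝ≥0} (hg : LipschitzWith K g)
    (hg0 : ∀ x ∉ s, g x = 0) (hg' : ∀ x ∈ s, HasFDerivWithinAt g (g' x) s x)
    (hcont : ContinuousOn g' s) :
    ∫ x in s, (1 + g' x).det ∂μ = μ.real s := by
  choose p hdeg hp using fun x => exists_polynomial_eval_eq_det_one_add_smul (g' x : E →ₗ[ℝ] E)
  replace hp (x) (t : ℝ) : (p x).eval t = (1 + t • g' x).det := hp x t
  have hint (t : ℝ) : IntegrableOn (fun x => (p x).eval t) s μ := by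
    simp only [hp]
    exact (ContinuousLinearMap.continuous_det.comp_continuousOn
      (continuousOn_const.add (hcont.const_smul t))).integrableOn_compact hs
  have hsmall : ∀ᶠ t : ℝ in 𝓝 0, ∫ x in s, (p x).eval t ∂μ = μ.real s := by
    have hK : ∀ᶠ t : ℝ in 𝓝 0, ‖t‖₊ * K < 1 := by
      have : Continuous fun t : ℝ => ‖t‖₊ * K := by fun_prop
      exact this.continuousAt.eventually_lt_const (by simp)
    filter_upwards [hK, eventually_forall_det_one_add_smul_pos (hs.image_of_continuousOn hcont)]
      with t htK hpos
    simp only [hp]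
    exact setIntegral_det_one_add_of_lipschitzWith_lt_one μ hs.measurableSet
      ((lipschitzWith_smul t).comp hg) htK (fun x hx => by simp [hg0 x hx])
      (fun x hx => (hg' x hx).const_smul t) (fun x hx => hpos _ (mem_image_of_mem g' hx))
  have hone := integral_eval_eq_of_infinite hdeg hint (infinite_of_mem_nhds 0 hsmall)
    (fun t ht => ht) 1
  simpa only [hp, one_smul] using hone

theorem setIntegral_det_fderiv_of_eqOn_frontier {s : Set E} (hs : IsCompact s) {r : E → E}
    (hr : ContDiff ℝ 1 r) (hfr : ∀ x ∈ frontier s, r x = x) :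
    ∫ x in s, (fderiv ℝ r x).det ∂μ = μ.real s := by
  have hq : ContDiff ℝ 1 fun x => r x - x := hr.sub contDiff_id
  obtain ⟨K, hK⟩ := hq.locallyLipschitz.locallyLipschitzOn.exists_lipschitzOnWith_of_compact hs
  have hlip := lipschitzWith_indicator_of_eqOn_frontier hs.isClosed hK
    fun x hx => sub_eq_zero.2 (hfr x hx)
  have hderiv (x) (hx : x ∈ s) :
      HasFDerivWithinAt (s.indicator fun x => r x - x) (fderiv ℝ r x - 1) s x :=
    (((hr.differentiable one_ne_zero x).hasFDerivAt.sub (hasFDerivAt_id x)).hasFDerivWithinAt).congr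
      (fun y hy => indicator_of_mem hy _) (indicator_of_mem hx _)
  have hcont : ContinuousOn (fun x => fderiv ℝ r x - 1) s :=
    ((hr.continuous_fderiv one_ne_zero).sub continuous_const).continuousOn
  simpa only [add_sub_cancel] using setIntegral_det_one_add_of_lipschitzWith μ hs hlip
    (fun x hx => indicator_of_notMem hx _) hderiv hcont

end Volume

section Brouwer

variable {E : Type*} [NormedAddCommGroup E] [InnerProductSpace ℝ E]

lemma exists_lipschitzWith_retraction_of_convex {s : Set E} (hne : s.Nonempty) (hs : IsComplete s)
    (hconv : Convex ℝ s) :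
    ∃ p : E → E, LipschitzWith 1 p ∧ (∀ x, p x ∈ s) ∧ ∀ x ∈ s, p x = x := by
  choose p hps hmin using exists_norm_eq_iInf_of_complete_convex hne hs hconv
  have hobtuse (x : E) : ∀ y ∈ s, inner ℝ (x - p x) (y - p x) ≤ 0 :=
    (norm_eq_iInf_iff_real_inner_le_zero hconv (hps x)).1 (hmin x)
  refine ⟨p, LipschitzWith.mk_one fun x y => ?_, hps, fun x hx => ?_⟩
  · have hinner : ‖p x - p y‖ ^ 2 ≤ inner ℝ (x - y) (p x - p y) := by
      have hsum := add_le_add (hobtuse x (p y) (hps y)) (hobtuse y (p x) (hps x))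
      rw [← neg_sub (p x) (p y), inner_neg_right] at hsum
      have hsplit : x - y = (x - p x) - (y - p y) + (p x - p y) := by abel
      rw [hsplit, inner_add_left, inner_sub_left, real_inner_self_eq_norm_sq]
      linarith
    rw [dist_eq_norm, dist_eq_norm]
    by_contra! hlt
    nlinarith [real_inner_le_norm (x - y) (p x - p y), norm_nonneg (x - y)]
  · have := hobtuse x x hx
    rw [real_inner_self_nonpos, sub_eq_zero] at this
    exact this.symm

variable [FiniteDimensional ℝ E]

lemma det_fderiv_eq_zero_of_norm_eventuallyEq_const {r : E → E} {R : ℝ} (hR : R ≠ 0) {x : E}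
    (hr : DifferentiableAt ℝ r x) (hnorm : ∀ᶠ y in 𝓝 x, ‖r y‖ = R) :
    (fderiv ℝ r x).det = 0 := by
  by_contra hdet
  have hsurj : Surjective (fderiv ℝ r x) :=
    (LinearMap.equivOfDetNeZero (fderiv ℝ r x : E →ₗ[ℝ] E) hdet).surjective
  obtain ⟨w, hw⟩ := hsurj (r x)
  have hconst : (fun y => inner ℝ (r y) (r y)) =ᶠ[𝓝 x] fun _ => R ^ 2 :=
    hnorm.mono fun y hy => by simp only [real_inner_self_eq_norm_sq, hy]
  have hzero : HasFDerivAt (fun y => inner ℝ (r y) (r y)) (0 : E →L[ℝ] ℝ) x :=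
    (hasFDerivAt_const (R ^ 2) x).congr_of_eventuallyEq hconst
  have hfderiv := (hr.hasFDerivAt.inner ℝ hr.hasFDerivAt).unique hzero
  have hinner : inner ℝ (r x) (r x) = (0 : ℝ) := by
    simpa [fderivInnerCLM_apply, hw] using DFunLike.congr_fun hfderiv w
  rw [real_inner_self_eq_norm_sq, hnorm.self_of_nhds] at hinner
  exact hR (pow_eq_zero_iff two_ne_zero |>.1 hinner)

lemma not_eqOn_sphere_of_contDiff_of_norm_eq {r : E → E} {R : ℝ} (hR : 0 < R)
    (hr : ContDiff ℝ 1 r) (hnorm : ∀ x, ‖r x‖ = R) : ¬ ∀ x ∈ sphere 0 R, r x = x := by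
  intro hfix
  let _ : MeasurableSpace E := borel E
  have _ : BorelSpace E := ⟨rfl⟩
  let μ : Measure E := Measure.addHaar
  have hvol := setIntegral_det_fderiv_of_eqOn_frontier μ (isCompact_closedBall 0 R) hr
    fun x hx => hfix x (frontier_closedBall (0 : E) hR.ne' ▸ hx)
  have hdet (x : E) : (fderiv ℝ r x).det = 0 :=
    det_fderiv_eq_zero_of_norm_eventuallyEq_const hR.ne' (hr.differentiable one_ne_zero x)
      (.of_forall hnorm)
  simp only [hdet, integral_zero] at hvol
  have hpos : 0 < μ.real (closedBall 0 R) :=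
    ENNReal.toReal_pos (measure_closedBall_pos μ 0 hR).ne' measure_closedBall_lt_top.ne
  exact hpos.ne hvol

lemma exists_isFixedPt_of_contDiff_of_hasCompactSupport {f : E → E} (hf : ContDiff ℝ 1 f)
    (hsupp : HasCompactSupport f) : ∃ x, IsFixedPt f x := by
  by_contra! hfix
  obtain ⟨R, hR, hball⟩ := hsupp.isBounded.subset_ball_lt 0 0
  have hne (x : E) : x - f x ≠ 0 := sub_ne_zero.2 (Ne.symm (hfix x))
  have hsub : ContDiff ℝ 1 fun x => x - f x := contDiff_id.sub hf
  refine not_eqOn_sphere_of_contDiff_of_norm_eq (r := fun x => (R / ‖x - f x‖) • (x - f x)) hR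
    ((contDiff_const.div (hsub.norm ℝ hne) fun x => norm_ne_zero_iff.2 (hne x)).smul hsub)
    (fun x => ?_) fun x hx => ?_
  · rw [norm_smul, norm_div, norm_norm, Real.norm_of_nonneg hR.le,
      div_mul_cancel₀ _ (norm_ne_zero_iff.2 (hne x))]
  · rw [mem_sphere_zero_iff_norm] at hx
    have hfx : f x = 0 := image_eq_zero_of_notMem_tsupport fun h => by
      have := mem_ball_zero_iff.1 (hball h)
      linarith
    simp only [hfx, sub_zero, hx, div_self hR.ne', one_smul]

lemma exists_isFixedPt_of_continuous_of_hasCompactSupport {f : E → E} (hf : Continuous f)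
    (hsupp : HasCompactSupport f) : ∃ x, IsFixedPt f x := by
  by_contra! hfix
  obtain ⟨h, hh, hdist, hsub⟩ := hf.exists_contDiff_approx 1 (ε := fun x => ‖f x - x‖)
    (by fun_prop) fun x => norm_pos_iff.2 (sub_ne_zero.2 (hfix x))
  obtain ⟨x, hx⟩ := exists_isFixedPt_of_contDiff_of_hasCompactSupport (mod_cast hh)
    (hsupp.mono hsub)
  have hlt := hdist x
  rw [hx.eq, dist_comm, dist_eq_norm] at hlt
  exact lt_irrefl _ hlt

lemma exists_isFixedPt_of_convex_of_isCompact_inner {s : Set E} (hne : s.Nonempty)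
    (hconv : Convex ℝ s) (hs : IsCompact s) {f : E → E} (hf : ContinuousOn f s)
    (hmaps : MapsTo f s s) : ∃ x ∈ s, IsFixedPt f x := by
  obtain ⟨p, hp, hps, hpid⟩ := exists_lipschitzWith_retraction_of_convex hne hs.isComplete hconv
  obtain ⟨ρ, hρ⟩ := hs.isBounded.exists_norm_le
  obtain ⟨χ, hχone, -, hχsupp, hχ⟩ := exists_continuous_one_zero_of_isCompact
    (isCompact_closedBall (0 : E) ρ) isClosed_empty (disjoint_empty _)
  have hcont : Continuous fun x => χ x • f (p x) :=
    χ.continuous.smul (hf.comp_continuous hp.continuous hps)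
  obtain ⟨x, hx⟩ := exists_isFixedPt_of_continuous_of_hasCompactSupport hcont hχsupp.smul_right
  have hfs : f (p x) ∈ s := hmaps (hps x)
  have hnorm : ‖x‖ ≤ ρ := by
    rw [← hx.eq, norm_smul, Real.norm_of_nonneg (hχ x).1]
    exact (mul_le_of_le_one_left (norm_nonneg _) (hχ x).2).trans (hρ _ hfs)
  have hfix : f (p x) = x := by
    have := hx.eq
    rwa [hχone (mem_closedBall_zero_iff.2 hnorm), Pi.one_apply, one_smul] at this
  have hxs : x ∈ s := hfix ▸ hfs
  exact ⟨x, hxs, by rwa [hpid x hxs] at hfix⟩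

end Brouwer

theorem exists_isFixedPt_of_convex_of_isCompact {E : Type*} [AddCommGroup E] [Module ℝ E]
    [TopologicalSpace E] [IsTopologicalAddGroup E] [ContinuousSMul ℝ E] [T2Space E]
    [FiniteDimensional ℝ E] {s : Set E} (hconv : Convex ℝ s) (hs : IsCompact s)
    (hne : s.Nonempty) {f : E → E} (hf : ContinuousOn f s) (hmaps : MapsTo f s s) :
    ∃ x ∈ s, IsFixedPt f x := by
  let e : E ≃L[ℝ] EuclideanSpace ℝ (Fin (Module.finrank ℝ E)) := toEuclidean
  have hsymm : MapsTo e.symm (e '' s) s := by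
    rintro _ ⟨x, hx, rfl⟩
    rwa [e.symm_apply_apply]
  obtain ⟨_, ⟨x, hx, rfl⟩, hfix⟩ := exists_isFixedPt_of_convex_of_isCompact_inner
    (f := e ∘ f ∘ e.symm) (hne.image e) (hconv.is_linear_image e.toLinearEquiv.isLinear)
    (hs.image e.continuous)
    (e.continuous.comp_continuousOn (hf.comp e.symm.continuous.continuousOn hsymm))
    ((mapsTo_image e s).comp (hmaps.comp hsymm))
  refine ⟨x, hx, e.injective ?_⟩
  simpa only [Function.comp_apply, e.symm_apply_apply] using hfix.eq

section Damped

lemma le_exp_neg_mul_of_mul_le_deriv {g g' : ℝ → ℝ} {a b δ : ℝ} (hg : ContinuousOn g (Icc a b))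
    (hderiv : ∀ t ∈ Ioo a b, HasDerivAt g (g' t) t) (hle : ∀ t ∈ Ioo a b, δ * g t ≤ g' t)
    {s t : ℝ} (hs : s ∈ Icc a b) (ht : t ∈ Icc a b) (hst : s ≤ t) :
    g s ≤ Real.exp (-(δ * (t - s))) * g t := by
  have hscaled (u) (hu : u ∈ Ioo a b) : HasDerivAt (fun u => Real.exp (-(δ * u)) * g u)
      (Real.exp (-(δ * u)) * (g' u - δ * g u)) u := by
    have hexp := ((hasDerivAt_id' u).const_mul δ).fun_neg.exp
    exact (hexp.fun_mul (hderiv u hu)).congr_deriv (by ring)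
  have hmono : MonotoneOn (fun u => Real.exp (-(δ * u)) * g u) (Icc a b) := by
    refine monotoneOn_of_deriv_nonneg (convex_Icc a b) (by fun_prop) ?_ ?_
    all_goals rw [interior_Icc]
    · exact fun u hu => (hscaled u hu).differentiableAt.differentiableWithinAt
    · intro u hu
      rw [(hscaled u hu).deriv]
      exact mul_nonneg (Real.exp_pos _).le (sub_nonneg.2 (hle u hu))
  calc g s = Real.exp (δ * s) * (Real.exp (-(δ * s)) * g s) := by
        rw [← mul_assoc, ← Real.exp_add, add_neg_cancel, Real.exp_zero, one_mul]
    _ ≤ Real.exp (δ * s) * (Real.exp (-(δ * t)) * g t) :=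
        mul_le_mul_of_nonneg_left (hmono hs ht hst) (Real.exp_pos _).le
    _ = Real.exp (-(δ * (t - s))) * g t := by
        rw [← mul_assoc, ← Real.exp_add]
        ring_nf

lemma eventually_mul_exp_neg_mul_le {a b c T : ℝ} (hb : 0 < b) (hc : 0 < c) :
    ∀ᶠ δ in atTop, a * (Real.exp (-(δ * b)) * T) ≤ c := by
  have hlim : Tendsto (fun δ => a * (Real.exp (-(δ * b)) * T)) atTop (𝓝 0) := by
    simpa using ((Real.tendsto_exp_neg_atTop_nhds_zero.comp
      (tendsto_id.atTop_mul_const hb)).mul_const T).const_mul a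
  exact hlim.eventually_le_const hc

section Reweight

variable {ι : Type*} [Fintype ι]

lemma comp_pos_of_mem_stdSimplex {g : ℝ → ℝ}
    (hg : ∀ t ∈ Icc (0 : ℝ) 1, 0 < g t) {x : ι → ℝ} (hx : x ∈ stdSimplex ℝ ι) (j : ι) :
    0 < (g ∘ x) j :=
  hg _ (mem_Icc_of_mem_stdSimplex hx j)

lemma two_mul_sub_one_le_sub_of_mem_stdSimplex {x : ι → ℝ}
    (hx : x ∈ stdSimplex ℝ ι) {i j : ι} (hij : i ≠ j) : 2 * x i - 1 ≤ x i - x j := by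
  have := Finset.add_le_sum (fun k _ => hx.1 k) (Finset.mem_univ i) (Finset.mem_univ j) hij
  linarith [hx.2]

/-- The probability vector with entries proportional to `c j * w j`: the rows of the transition
matrix of the damped model are convex combinations of two such vectors. It is the zero vector
when the total mass `∑ k, c k * w k` vanishes. -/
noncomputable def reweight (c w : ι → ℝ) (j : ι) : ℝ :=
  c j * w j / ∑ k, c k * w k

variable {c w : ι → ℝ}

lemma sum_mul_pos_of_pos (hc : 0 < c) (hw : ∀ j, 0 < w j) : 0 < ∑ k, c k * w k := by
  obtain ⟨hc0, j, hj⟩ := Pi.lt_def.1 hc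
  exact Finset.sum_pos' (fun k _ => mul_nonneg (hc0 k) (hw k).le)
    ⟨j, Finset.mem_univ j, mul_pos hj (hw j)⟩

lemma reweight_mem_stdSimplex (hc : 0 < c) (hw : ∀ j, 0 < w j) :
    reweight c w ∈ stdSimplex ℝ ι := by
  have hsum := sum_mul_pos_of_pos hc hw
  refine ⟨fun j => div_nonneg (mul_nonneg (hc.le j) (hw j).le) hsum.le, ?_⟩
  simp only [reweight]
  rw [← Finset.sum_div, div_self hsum.ne']

lemma continuousOn_reweight_comp (hc : 0 < c) {g : ℝ → ℝ}
    (hg : ContinuousOn g (Icc 0 1)) (hpos : ∀ t ∈ Icc (0 : ℝ) 1, 0 < g t) :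
    ContinuousOn (fun x : ι → ℝ => reweight c (g ∘ x)) (stdSimplex ℝ ι) := by
  have hcoord (j : ι) : ContinuousOn (fun x : ι → ℝ => c j * g (x j)) (stdSimplex ℝ ι) :=
    continuousOn_const.mul
      (hg.comp (continuous_apply j).continuousOn fun x hx => mem_Icc_of_mem_stdSimplex hx j)
  exact continuousOn_pi.2 fun j => (hcoord j).div
    (continuousOn_finsetSum _ fun k _ => hcoord k)
    fun x hx => (sum_mul_pos_of_pos hc (comp_pos_of_mem_stdSimplex hpos hx)).ne'

lemma le_mul_reweight [DecidableEq ι] {i : ι} {a r γ : ℝ} (ha : 0 ≤ a) (hc : 0 ≤ c)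
    (hci : 0 < c i) (hw : ∀ j, 0 < w j) (hr : ∀ j, j ≠ i → w j ≤ r * w i)
    (hsmall : a * (r * ∑ j ∈ Finset.univ.erase i, c j) ≤ (γ - a) * c i) :
    a ≤ γ * reweight c w i := by
  have hsum : 0 < ∑ k, c k * w k :=
    sum_mul_pos_of_pos (Pi.lt_def.2 ⟨hc, i, hci⟩) hw
  have hrest : ∑ j ∈ Finset.univ.erase i, c j * w j ≤
      w i * (r * ∑ j ∈ Finset.univ.erase i, c j) := by
    rw [Finset.mul_sum, Finset.mul_sum]
    refine Finset.sum_le_sum fun j hj => ?_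
    linarith [mul_le_mul_of_nonneg_left (hr j (Finset.ne_of_mem_erase hj)) (hc j)]
  rw [reweight, ← mul_div_assoc, le_div_iff₀ hsum]
  calc a * ∑ k, c k * w k
      = a * (c i * w i) + a * ∑ j ∈ Finset.univ.erase i, c j * w j := by
        rw [← Finset.add_sum_erase _ _ (Finset.mem_univ i), mul_add]
    _ ≤ a * (c i * w i) + a * (w i * (r * ∑ j ∈ Finset.univ.erase i, c j)) := by gcongr
    _ ≤ γ * (c i * w i) := by linarith [mul_le_mul_of_nonneg_left hsmall (hw i).le]

end Reweight

variable {n : ℕ} {C : Matrix (Fin n) (Fin n) ℝ} {d : Fin n → ℝ} {γ : ℝ} {g₁ g₂ : ℝ → ℝ}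

lemma Md_row_eq_reweight (x : Fin n → ℝ) (i : Fin n) :
    Md C d γ g₁ g₂ x i = γ • reweight (C i) (g₁ ∘ x) + (1 - γ) • reweight d (g₂ ∘ x) :=
  rfl

lemma mapsTo_fd_stdSimplex (hC : ∀ i, 0 < C i) (hd : 0 < d) (hγ : γ ∈ Icc (0 : ℝ) 1)
    (hg₁ : ∀ t ∈ Icc (0 : ℝ) 1, 0 < g₁ t) (hg₂ : ∀ t ∈ Icc (0 : ℝ) 1, 0 < g₂ t) :
    MapsTo (fd C d γ g₁ g₂) (stdSimplex ℝ (Fin n)) (stdSimplex ℝ (Fin n)) := by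
  intro x hx
  have hrow (i : Fin n) : Md C d γ g₁ g₂ x i ∈ stdSimplex ℝ (Fin n) := by
    rw [Md_row_eq_reweight]
    exact convex_stdSimplex ℝ (Fin n)
      (reweight_mem_stdSimplex (hC i) (comp_pos_of_mem_stdSimplex hg₁ hx))
      (reweight_mem_stdSimplex hd (comp_pos_of_mem_stdSimplex hg₂ hx))
      hγ.1 (sub_nonneg.2 hγ.2) (add_sub_cancel γ 1)
  rw [fd, vecMul_eq_sum]
  exact (convex_stdSimplex ℝ (Fin n)).sum_mem (fun i _ => hx.1 i) hx.2 fun i _ => hrow i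

lemma continuousOn_fd (hC : ∀ i, 0 < C i) (hd : 0 < d)
    (hg₁ : ContinuousOn g₁ (Icc 0 1)) (hpos₁ : ∀ t ∈ Icc (0 : ℝ) 1, 0 < g₁ t)
    (hg₂ : ContinuousOn g₂ (Icc 0 1)) (hpos₂ : ∀ t ∈ Icc (0 : ℝ) 1, 0 < g₂ t) :
    ContinuousOn (fd C d γ g₁ g₂) (stdSimplex ℝ (Fin n)) := by
  have hfd : fd C d γ g₁ g₂ = fun x => ∑ i, x i •
      (γ • reweight (C i) (g₁ ∘ x) + (1 - γ) • reweight d (g₂ ∘ x)) := by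
    funext x
    simp only [fd, vecMul_eq_sum, Md_row_eq_reweight]
  rw [hfd]
  exact continuousOn_finsetSum _ fun i _ => (continuous_apply i).continuousOn.smul
    (((continuousOn_reweight_comp (hC i) hg₁ hpos₁).const_smul γ).add
      ((continuousOn_reweight_comp hd hg₂ hpos₂).const_smul (1 - γ)))

lemma le_fd_apply {i₀ : Fin n} {a r : ℝ} (ha : 0 ≤ a) (hC : ∀ i j, 0 ≤ C i j)
    (hcol : ∀ i, 0 < C i i₀) (hd : 0 < d) (hγ : γ ≤ 1)
    (hsmall : ∀ i, a * (r * ∑ j ∈ Finset.univ.erase i₀, C i j) ≤ (γ - a) * C i i₀)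
    {x : Fin n → ℝ} (hx : x ∈ stdSimplex ℝ (Fin n)) (hg₁ : ∀ j, 0 < g₁ (x j))
    (hr : ∀ j, j ≠ i₀ → g₁ (x j) ≤ r * g₁ (x i₀)) (hg₂ : ∀ j, 0 < g₂ (x j)) :
    a ≤ fd C d γ g₁ g₂ x i₀ := by
  have hentry (i : Fin n) : a ≤ Md C d γ g₁ g₂ x i i₀ :=
    (le_mul_reweight ha (hC i) (hcol i) hg₁ hr (hsmall i)).trans <| le_add_of_nonneg_right <|
      mul_nonneg (sub_nonneg.2 hγ) ((reweight_mem_stdSimplex hd hg₂).1 i₀)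
  calc a = ∑ i, x i * a := by rw [← Finset.sum_mul, hx.2, one_mul]
    _ ≤ ∑ i, x i * Md C d γ g₁ g₂ x i i₀ :=
      Finset.sum_le_sum fun i _ => mul_le_mul_of_nonneg_left (hentry i) (hx.1 i)

lemma mapsTo_fd_stdSimplex_inter_le_apply {i₀ : Fin n} {a δ : ℝ} {g₁' : ℝ → ℝ}
    (hC : ∀ i j, 0 ≤ C i j) (hcol : ∀ i, 0 < C i i₀) (hd : 0 < d) (ha : 1 / 2 ≤ a)
    (hγ : γ ∈ Icc 0 1) (hδ : 0 ≤ δ)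
    (hsmall : ∀ i, a * (Real.exp (-(δ * (2 * a - 1))) * ∑ j ∈ Finset.univ.erase i₀, C i j) ≤
      (γ - a) * C i i₀)
    (hg₁ : ContinuousOn g₁ (Icc 0 1)) (hpos₁ : ∀ t ∈ Icc (0 : ℝ) 1, 0 < g₁ t)
    (hderiv : ∀ t ∈ Ioo (0 : ℝ) 1, HasDerivAt g₁ (g₁' t) t)
    (hgrowth : ∀ t ∈ Ioo (0 : ℝ) 1, δ * g₁ t ≤ g₁' t)
    (hpos₂ : ∀ t ∈ Icc (0 : ℝ) 1, 0 < g₂ t) :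
    MapsTo (fd C d γ g₁ g₂) (stdSimplex ℝ (Fin n) ∩ {x | a ≤ x i₀})
      (stdSimplex ℝ (Fin n) ∩ {x | a ≤ x i₀}) := by
  rintro x ⟨hx, hax : a ≤ x i₀⟩
  have hratio (j) (hj : j ≠ i₀) :
      g₁ (x j) ≤ Real.exp (-(δ * (2 * a - 1))) * g₁ (x i₀) := by
    have hgap : 2 * a - 1 ≤ x i₀ - x j := by
      linarith [two_mul_sub_one_le_sub_of_mem_stdSimplex hx hj.symm]
    have hmem := mem_Icc_of_mem_stdSimplex hx
    calc g₁ (x j) ≤ Real.exp (-(δ * (x i₀ - x j))) * g₁ (x i₀) :=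
          le_exp_neg_mul_of_mul_le_deriv hg₁ hderiv hgrowth (hmem j) (hmem i₀) (by linarith)
      _ ≤ Real.exp (-(δ * (2 * a - 1))) * g₁ (x i₀) := by
          have := (hpos₁ _ (hmem i₀)).le
          gcongr
  exact ⟨mapsTo_fd_stdSimplex (fun i => Pi.lt_def.2 ⟨hC i, i₀, hcol i⟩) hd hγ hpos₁
    hpos₂ hx, le_fd_apply (by linarith) hC hcol hd hγ.2 hsmall hx
      (comp_pos_of_mem_stdSimplex hpos₁ hx) hratio (comp_pos_of_mem_stdSimplex hpos₂ hx)⟩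

theorem damped_fixed_point_majority_first_column_positive_general
    (C : Matrix (Fin n) (Fin n) ℝ) (hC : ∀ i j, 0 ≤ C i j) (i₀ : Fin n)
    (hcol : ∀ i, 0 < C i i₀) (d : Fin n → ℝ) (hd : 0 < d) {a γ : ℝ} (ha : 1 / 2 < a)
    (haγ : a < γ) (hγ : γ ≤ 1) :
    ∃ δ : ℝ, 0 < δ ∧ ∀ g₁ g₁' : ℝ → ℝ, ContinuousOn g₁ (Icc 0 1) →
      (∀ t ∈ Icc (0 : ℝ) 1, 0 < g₁ t) → (∀ t ∈ Ioo (0 : ℝ) 1, HasDerivAt g₁ (g₁' t) t) →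
      (∀ t ∈ Ioo (0 : ℝ) 1, δ * g₁ t ≤ g₁' t) →
      ∀ g₂ : ℝ → ℝ, ContinuousOn g₂ (Icc 0 1) → (∀ t ∈ Icc (0 : ℝ) 1, 0 < g₂ t) →
        ∃ x ∈ stdSimplex ℝ (Fin n), a ≤ x i₀ ∧ fd C d γ g₁ g₂ x = x := by
  have hCrow (i : Fin n) : 0 < C i := Pi.lt_def.2 ⟨hC i, i₀, hcol i⟩
  obtain ⟨δ, hsmall, hδ⟩ := ((eventually_all.2 fun i => eventually_mul_exp_neg_mul_le
    (a := a) (T := ∑ j ∈ Finset.univ.erase i₀, C i j) (by linarith : 0 < 2 * a - 1)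
    (mul_pos (sub_pos.2 haγ) (hcol i))).and (eventually_gt_atTop 0)).exists
  refine ⟨δ, hδ, fun g₁ g₁' hg₁ hpos₁ hderiv hgrowth g₂ hg₂ hpos₂ => ?_⟩
  let s : Set (Fin n → ℝ) := stdSimplex ℝ (Fin n) ∩ {x | a ≤ x i₀}
  have hconv : Convex ℝ s :=
    (convex_stdSimplex ℝ _).inter (convex_halfSpace_ge
      (LinearMap.proj i₀ : (Fin n → ℝ) →ₗ[ℝ] ℝ).isLinear a)
  have hcompact : IsCompact s :=
    (isCompact_stdSimplex ℝ _).inter_right (isClosed_le continuous_const (continuous_apply i₀))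
  have hvertex : Pi.single i₀ 1 ∈ s :=
    ⟨single_mem_stdSimplex ℝ i₀, by simpa using haγ.le.trans hγ⟩
  have hmaps : MapsTo (fd C d γ g₁ g₂) s s := mapsTo_fd_stdSimplex_inter_le_apply hC hcol hd ha.le
    ⟨by linarith, hγ⟩ hδ.le hsmall hg₁ hpos₁ hderiv hgrowth hpos₂
  obtain ⟨x, ⟨hx, hax⟩, hfix⟩ := exists_isFixedPt_of_convex_of_isCompact hconv hcompact
    ⟨_, hvertex⟩ ((continuousOn_fd hCrow hd hg₁ hpos₁ hg₂ hpos₂).mono inter_subset_left) hmaps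
  exact ⟨x, hx, hax, hfix⟩

end Damped

theorem damped_fixed_point_majority_first_column_positive
    (n : ℕ) (C : Matrix (Fin (n+1)) (Fin (n+1)) ℝ)
    (hC0 : ∀ i j, 0 ≤ C i j) (hrow : ∀ i, ∃ j, 0 < C i j)
    (hcol : ∀ i, 0 < C i 0)
    (d : Fin (n+1) → ℝ) (hd : ∀ i, 0 < d i)
    (γ : ℝ) (hγ0 : 1/2 < γ) (hγ1 : γ < 1) :
    ∃ δ : ℝ, 0 < δ ∧
      ∀ g₁ g₁' : ℝ → ℝ, ∀ Lm₁ : ℝ, IsAdmissible g₁ g₁' →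
        IsLeast (ratioSet g₁ g₁') Lm₁ → δ ≤ Lm₁ →
        ∀ g₂ g₂' : ℝ → ℝ, IsWeight g₂ g₂' →
          ∃ x ∈ stdSimplex ℝ (Fin (n+1)), 1/2 < x 0 ∧ fd C d γ g₁ g₂ x = x := by
  obtain ⟨a, ha, haγ⟩ := exists_between hγ0
  have hdpos : 0 < d := Pi.lt_def.2 ⟨fun i => (hd i).le, 0, hd 0⟩
  obtain ⟨δ, hδ, hfix⟩ :=
    damped_fixed_point_majority_first_column_positive_general C hC0 0 hcol d hdpos ha haγ hγ1.le
  refine ⟨δ, hδ, ?_⟩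
  rintro g₁ g₁' L ⟨hderiv₁, -, -, hpos₁, -⟩ hL hδL g₂ g₂' ⟨hderiv₂, -, -, hpos₂, -⟩
  have hgrowth (t) (ht : t ∈ Ioo (0 : ℝ) 1) : δ * g₁ t ≤ g₁' t := by
    have ht' := Ioo_subset_Icc_self ht
    exact (le_div_iff₀ (hpos₁ t ht')).1 (hδL.trans (hL.2 (mem_image_of_mem _ ht')))
  obtain ⟨x, hx, hax, hxfix⟩ := hfix g₁ g₁' (HasDerivWithinAt.continuousOn hderiv₁) hpos₁
    (fun t ht => (hderiv₁ t (Ioo_subset_Icc_self ht)).hasDerivAt (Icc_mem_nhds ht.1 ht.2))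
    hgrowth g₂ (HasDerivWithinAt.continuousOn hderiv₂) hpos₂
  exact ⟨x, hx, ha.trans_le hax, hxfix⟩
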